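/- Let φ be an automorphism of the open unit ball B_N of ℂ^N, i.e. a biholomorphic bijection of B_N onto itself. Then φ can be embedded into a semigroup of holomorphic self-maps of B_N; that is, there exists a semigroup (φ_t)_{t≥0} of holomorphic self-maps of B_N with φ_1 = φ. -/

import Mathlib

open Set Complex Filter

noncomputable section

/-- The squared Euclidean norm on `ℂ^n`. -/
def enormSq {n : Type*} [Fintype n] (x : n → ℂ) : ℝ :=
  ∑ j, ‖x j‖ ^ 2

/-- The open unit ball `B_N` of `ℂ^N`. -/
def Ball (N : ℕ) : Set (Fin N → ℂ) := {z | enormSq z < 1}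

/-- `(φ t)_{t ≥ 0}` is a (continuous) semigroup of holomorphic self-maps of `U`. -/
def IsHolSemigroupOn {E : Type*} [NormedAddCommGroup E] [NormedSpace ℂ E]
    (U : Set E) (φ : ℝ → E → E) : Prop :=
  (∀ t : ℝ, 0 ≤ t → MapsTo (φ t) U U) ∧
  (∀ t : ℝ, 0 ≤ t → DifferentiableOn ℂ (φ t) U) ∧
  (∀ z ∈ U, φ 0 z = z) ∧
  (∀ s : ℝ, 0 ≤ s → ∀ t : ℝ, 0 ≤ t → ∀ z ∈ U, φ (s + t) z = φ s (φ t z)) ∧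
  (∀ K : Set E, K ⊆ U → IsCompact K →
    TendstoUniformlyOn (fun t => φ t) id (nhdsWithin 0 (Ioi 0)) K)

theorem Commute.ringInverse_right {M₀ : Type*} [MonoidWithZero M₀] {a b : M₀} (hb : IsUnit b)
    (h : Commute a b) : Commute a (Ring.inverse b) := by
  obtain ⟨u, rfl⟩ := hb
  rw [Ring.inverse_unit]
  exact h.units_inv_right

section Logarithm

variable {𝔸 : Type*} [NormedRing 𝔸] [NormedAlgebra ℝ 𝔸]

theorem HasDerivAt.exp_of_commute [CompleteSpace 𝔸] {L : ℝ → 𝔸} {L' : 𝔸} {x : ℝ}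
    (hL : HasDerivAt L L' x)
    (hc : ∀ s t, Commute (L s) (L t)) :
    HasDerivAt (fun s => NormedSpace.exp (L s)) (NormedSpace.exp (L x) * L') x := by
  let _ : NormedAlgebra ℚ 𝔸 := .restrictScalars ℚ ℝ 𝔸
  have hsplit : (fun s => NormedSpace.exp (L s)) =
      fun s => NormedSpace.exp (L x) * NormedSpace.exp (L s - L x) := by
    funext s
    rw [← NormedSpace.exp_add_of_commute ((hc x s).sub_right (Commute.refl _)), add_sub_cancel]
  have hexp : HasFDerivAt (NormedSpace.exp : 𝔸 → 𝔸) (1 : 𝔸 →L[ℝ] 𝔸) (L x - L x) := by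
    simpa using hasFDerivAt_exp_zero (𝕂 := ℝ) (𝔸 := 𝔸)
  rw [hsplit]
  simpa using (hexp.comp_hasDerivAt x (hL.sub_const (L x))).const_mul (NormedSpace.exp (L x))

theorem Commute.intervalIntegral_right [CompleteSpace 𝔸] {f : ℝ → 𝔸} (hf : Continuous f) {y : 𝔸}
    (hc : ∀ s, Commute y (f s)) (a b : ℝ) : Commute y (∫ s in a..b, f s) := by
  have hl := (ContinuousLinearMap.mul ℝ 𝔸 y).intervalIntegral_comp_comm
    (hf.intervalIntegrable (μ := MeasureTheory.volume) a b)
  have hr := ((ContinuousLinearMap.mul ℝ 𝔸).flip y).intervalIntegral_comp_comm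
    (hf.intervalIntegrable (μ := MeasureTheory.volume) a b)
  simp only [ContinuousLinearMap.mul_apply', ContinuousLinearMap.flip_apply] at hl hr
  rw [Commute, SemiconjBy, ← hl, ← hr]
  exact intervalIntegral.integral_congr fun s _ => hc s

/-- The integrand `(M - 1) (1 + s (M - 1))⁻¹` of the logarithm, with `s` clamped to `[0, 1]`. -/
def logIntegrand (M : 𝔸) (s : ℝ) : 𝔸 :=
  (M - 1) * Ring.inverse (1 + (projIcc (0 : ℝ) 1 zero_le_one s : ℝ) • (M - 1))

/-- The principal logarithm of an element whose segment to `1` consists of units. -/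
def segmentLog (M : 𝔸) : 𝔸 := ∫ s in (0 : ℝ)..1, logIntegrand M s

variable {M : 𝔸}

theorem logIntegrand_of_mem {s : ℝ} (hs : s ∈ Icc (0 : ℝ) 1) :
    logIntegrand M s = (M - 1) * Ring.inverse (1 + s • (M - 1)) := by
  rw [logIntegrand, projIcc_of_mem _ hs]

theorem continuous_logIntegrand [CompleteSpace 𝔸]
    (hM : ∀ s ∈ Icc (0 : ℝ) 1, IsUnit (1 + s • (M - 1))) :
    Continuous (logIntegrand M) := by
  refine continuous_const.mul (continuous_iff_continuousAt.2 fun s => ?_)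
  obtain ⟨u, hu⟩ := hM _ (projIcc (0 : ℝ) 1 zero_le_one s).2
  refine ContinuousAt.comp (g := Ring.inverse) ?_ ?_
  · rw [← hu]; exact NormedRing.inverse_continuousAt u
  · have : Continuous fun s : ℝ => (projIcc (0 : ℝ) 1 zero_le_one s : ℝ) :=
      continuous_subtype_val.comp continuous_projIcc
    fun_prop

theorem commute_segment (s t : ℝ) : Commute (1 + s • (M - 1)) (1 + t • (M - 1)) :=
  ((Commute.one_left _).add_left
    (((Commute.one_right _).add_right ((Commute.refl _).smul_right t)).smul_left s))

theorem commute_logIntegrand (hM : ∀ s ∈ Icc (0 : ℝ) 1, IsUnit (1 + s • (M - 1))) (s t : ℝ) :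
    Commute (logIntegrand M s) (logIntegrand M t) := by
  have h0 : ∀ t : ℝ, Commute (M - 1) (1 + t • (M - 1)) := fun t =>
    (Commute.one_right _).add_right ((Commute.refl _).smul_right t)
  have h1 : ∀ t : ℝ, Commute (M - 1)
      (Ring.inverse (1 + (projIcc (0 : ℝ) 1 zero_le_one t : ℝ) • (M - 1))) := fun t =>
    Commute.ringInverse_right (hM _ (projIcc (0 : ℝ) 1 zero_le_one t).2) (h0 _)
  exact ((Commute.refl _).mul_right (h1 t)).mul_left
    ((h1 s).symm.mul_right (commute_segment _ _).ringInverse_ringInverse)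

theorem exp_segmentLog [CompleteSpace 𝔸] (hM : ∀ s ∈ Icc (0 : ℝ) 1, IsUnit (1 + s • (M - 1))) :
    NormedSpace.exp (segmentLog M) = M := by
  let _ : NormedAlgebra ℚ 𝔸 := .restrictScalars ℚ ℝ 𝔸
  have hcont := continuous_logIntegrand hM
  set L : ℝ → 𝔸 := fun x => -∫ s in (0 : ℝ)..x, logIntegrand M s with hLdef
  have hLder : ∀ x, HasDerivAt L (-logIntegrand M x) x := fun x =>
    (intervalIntegral.integral_hasDerivAt_right (hcont.intervalIntegrable _ _)
      (hcont.stronglyMeasurableAtFilter _ _) hcont.continuousAt).neg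
  have hLcomm : ∀ s t, Commute (L s) (L t) := fun s t =>
    (Commute.intervalIntegral_right hcont (fun t => (Commute.intervalIntegral_right hcont
      (commute_logIntegrand hM t) _ _).symm) _ _).neg_left.neg_right
  have hexp := fun x => (hLder x).exp_of_commute hLcomm
  have hseg : ∀ x : ℝ, HasDerivAt (fun s : ℝ => 1 + s • (M - 1)) (M - 1) x := fun x => by
    simpa using ((hasDerivAt_id x).smul_const (M - 1)).const_add 1
  have hprod := fun x => (hexp x).mul (hseg x)
  have hconst := constant_of_has_deriv_right_zero (a := 0) (b := 1)
    (fun x _ => (hprod x).continuousAt.continuousWithinAt) (fun x hx => by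
      have hx' := Ico_subset_Icc_self hx
      convert (hprod x).hasDerivWithinAt using 1
      rw [logIntegrand_of_mem hx', mul_assoc, neg_mul, mul_assoc,
        Ring.inverse_mul_cancel _ (hM x hx'), mul_one, ← mul_add, neg_add_cancel, mul_zero])
    1 (by simp)
  have hone : NormedSpace.exp (-segmentLog M) * M = 1 := by
    simpa [hLdef, segmentLog] using hconst
  calc NormedSpace.exp (segmentLog M)
      = NormedSpace.exp (segmentLog M) * (NormedSpace.exp (-segmentLog M) * M) := by
        rw [hone, mul_one]
    _ = M := by
        rw [← mul_assoc, ← NormedSpace.exp_add_of_commute (Commute.refl _).neg_right]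
        simp

theorem star_segmentLog_mul [CompleteSpace 𝔸] [StarRing 𝔸] [ContinuousStar 𝔸] [StarModule ℝ 𝔸]
    {J : 𝔸}
    (hJ : star M * J * M = J)
    (hM : ∀ s ∈ Icc (0 : ℝ) 1, IsUnit (1 + s • (M - 1))) :
    star (segmentLog M) * J = J * -segmentLog M := by
  have hcont := continuous_logIntegrand hM
  have hint := hcont.intervalIntegrable (μ := MeasureTheory.volume) 0 1
  have hpt : ∀ s ∈ Icc (0 : ℝ) 1,
      star (logIntegrand M (1 - s)) * J = J * -logIntegrand M s := by
    intro s hs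
    have hs' : 1 - s ∈ Icc (0 : ℝ) 1 := ⟨by linarith [hs.2], by linarith [hs.1]⟩
    obtain ⟨u, hu⟩ := hM s hs
    obtain ⟨v, hv⟩ := hM (1 - s) hs'
    have hcomm : Commute (M - 1) (1 + (1 - s) • (M - 1)) :=
      (Commute.one_right _).add_right ((Commute.refl _).smul_right _)
    rw [logIntegrand_of_mem hs, logIntegrand_of_mem hs', ← hu, ← hv, Ring.inverse_unit,
      Ring.inverse_unit]
    have hstar_v : star (v : 𝔸) * J * M = J * u := by
      have : star (v : 𝔸) * J * M = (s • (J * M) + (1 - s) • (star M * J * M)) := by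
        rw [hv]
        simp only [star_add, star_one, star_smul, star_trivial, star_sub, add_mul, smul_mul_assoc,
          sub_mul, one_mul]
        module
      rw [this, hJ, hu]
      simp only [mul_add, mul_one, mul_smul_comm, mul_sub]
      module
    have hsub_one : star (M - 1) * J * M = -(J * (M - 1)) := by
      simp only [star_sub, star_one, sub_mul, one_mul, hJ, mul_sub, mul_one]; abel
    have hcv : Commute (M - 1) ↑v⁻¹ := Commute.units_inv_right (by rw [hv]; exact hcomm)
    have hvinv : J * M * ↑u⁻¹ = star (↑v⁻¹ : 𝔸) * J := by
      calc J * M * ↑u⁻¹ = star (↑v⁻¹ : 𝔸) * (star (v : 𝔸) * J * M) * ↑u⁻¹ := by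
            rw [← mul_assoc, ← mul_assoc, ← star_mul, Units.mul_inv, star_one, one_mul]
        _ = star (↑v⁻¹ : 𝔸) * J := by rw [hstar_v, mul_assoc, mul_assoc, Units.mul_inv, mul_one]
    calc star ((M - 1) * ↑v⁻¹) * J = star (M - 1) * (star (↑v⁻¹ : 𝔸) * J) := by
          rw [hcv.eq, star_mul, mul_assoc]
      _ = star (M - 1) * J * M * ↑u⁻¹ := by rw [← hvinv]; simp only [mul_assoc]
      _ = J * -((M - 1) * ↑u⁻¹) := by rw [hsub_one]; simp only [mul_assoc, mul_neg, neg_mul]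
  have hl := (((ContinuousLinearMap.mul ℝ 𝔸).flip J).comp
    (starL' ℝ (A := 𝔸) : 𝔸 →L[ℝ] 𝔸)).intervalIntegral_comp_comm hint
  have hr := (ContinuousLinearMap.mul ℝ 𝔸 J).intervalIntegral_comp_comm hint.neg
  simp only [ContinuousLinearMap.mul_apply', ContinuousLinearMap.flip_apply,
    ContinuousLinearMap.comp_apply, ContinuousLinearEquiv.coe_coe, starL'_apply,
    Pi.neg_apply, intervalIntegral.integral_neg] at hl hr
  rw [segmentLog, ← hl, ← hr]
  have hsub := intervalIntegral.integral_comp_sub_left (a := 0) (b := 1)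
    (fun s => star (logIntegrand M s) * J) 1
  simp only [sub_self, sub_zero] at hsub
  rw [← hsub]
  refine intervalIntegral.integral_congr fun s hs => ?_
  rw [uIcc_of_le zero_le_one] at hs
  exact hpt s hs

theorem star_exp_smul_mul_exp_smul [CompleteSpace 𝔸] [StarRing 𝔸] [ContinuousStar 𝔸] [StarModule ℝ 𝔸]
    {J X : 𝔸}
    (h : star X * J = J * -X) (t : ℝ) :
    star (NormedSpace.exp (t • X)) * J * NormedSpace.exp (t • X) = J := by
  let _ : NormedAlgebra ℚ 𝔸 := .restrictScalars ℚ ℝ 𝔸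
  have hs : SemiconjBy J (-(t • X)) (star (t • X)) := by
    rw [SemiconjBy, star_smul, star_trivial, smul_mul_assoc, h, ← smul_neg, mul_smul_comm]
  have := hs.exp_right.eq
  rw [NormedSpace.star_exp, ← this, mul_assoc,
    ← NormedSpace.exp_add_of_commute (Commute.refl _).neg_left, neg_add_cancel,
    NormedSpace.exp_zero, mul_one]

end Logarithm

section FiniteDimensionalOperators

variable {H : Type*} [NormedAddCommGroup H] [NormedSpace ℂ H] [FiniteDimensional ℂ H]

theorem ContinuousLinearMap.finite_spectrum (M : H →L[ℂ] H) : (spectrum ℂ M).Finite := by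
  have h := AlgEquiv.spectrum_eq (Module.End.toContinuousLinearMap (𝕜 := ℂ) H).symm M
  rw [← h]
  exact Module.End.finite_spectrum _

theorem infinite_unit_circle : (Metric.sphere (0 : ℂ) 1).Infinite := by
  refine (isPreconnected_sphere (by simp) 0 1).infinite_of_nontrivial ?_
  exact ⟨1, by simp, -1, by simp, by norm_num⟩

/-- An invertible operator can be rotated so that the segment from it to `1` avoids the
non-invertible operators. -/
theorem exists_rotation_isUnit_segment (M : H →L[ℂ] H) (hM : IsUnit M) :
    ∃ c : ℂ, ‖c‖ = 1 ∧ ∀ s ∈ Icc (0 : ℝ) 1, IsUnit (1 + s • (c • M - 1)) := by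
  obtain ⟨c, hc, hcM⟩ := (infinite_unit_circle.sdiff
    (M.finite_spectrum.image fun μ => -(‖μ‖ : ℂ) / μ)).nonempty
  have hc1 : ‖c‖ = 1 := by simpa using hc
  have hc0 : c ≠ 0 := by rintro rfl; simp at hc1
  refine ⟨c, hc1, fun s hs => ?_⟩
  by_contra hunit
  rcases hs.1.eq_or_lt with rfl | hs0
  · simp at hunit
  have hs0' : (s : ℂ) ≠ 0 := by exact_mod_cast hs0.ne'
  set μ : ℂ := -((1 - s) / (s * c)) with hμ
  have hmem : μ ∈ spectrum ℂ M := by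
    rw [spectrum.mem_iff]
    intro h
    apply hunit
    have heq : (1 : H →L[ℂ] H) + s • (c • M - 1) =
        (-(s * c)) • (algebraMap ℂ (H →L[ℂ] H) μ - M) := by
      have hc' : -(s * c) * μ = 1 - s := by rw [hμ]; field_simp
      have hexpand : (-(s * c)) • (μ • (1 : H →L[ℂ] H) - M) =
          (-(s * c) * μ) • (1 : H →L[ℂ] H) + (s * c) • M := by module
      rw [Algebra.algebraMap_eq_smul_one, ← Complex.coe_smul, hexpand, hc']
      module
    rw [heq]
    rw [Algebra.smul_def]
    exact ((IsUnit.mk0 _ (neg_ne_zero.2 (mul_ne_zero hs0' hc0))).map _).mul h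
  apply hcM
  refine ⟨μ, hmem, ?_⟩
  have hμ0 : μ ≠ 0 := by
    rintro h
    rw [h, spectrum.zero_mem_iff] at hmem
    exact hmem hM
  have hs1 : (1 : ℂ) - s ≠ 0 := by
    intro h
    simp [hμ, h] at hμ0
  have hnorm : (‖μ‖ : ℂ) = (1 - s) / s := by
    have h1 : ‖(1 : ℂ) - s‖ = 1 - s := by
      rw [← Complex.ofReal_one, ← Complex.ofReal_sub, Complex.norm_real, Real.norm_of_nonneg]
      linarith [hs.2]
    rw [hμ, norm_neg, norm_div, norm_mul, hc1, h1, mul_one, Complex.norm_real,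
      Real.norm_of_nonneg hs0.le]
    push_cast
    rfl
  simp only [hnorm]
  rw [hμ]
  field_simp

/-- Up to rotation, an operator preserving a nondegenerate sesquilinear form lies on a one-parameter
group of operators preserving this form. -/
theorem exists_one_parameter_group {H : Type*} [NormedAddCommGroup H] [InnerProductSpace ℂ H]
    [FiniteDimensional ℂ H] [CompleteSpace H] {J M : H →L[ℂ] H} (hJJ : J * J = 1)
    (hM : star M * J * M = J) :
    ∃ (c : ℂ) (T : ℝ → H →L[ℂ] H), ‖c‖ = 1 ∧ Continuous T ∧ T 0 = 1 ∧ T 1 = c • M ∧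
      (∀ s t, T (s + t) = T s * T t) ∧ ∀ t, star (T t) * J * T t = J := by
  let _ : NormedAlgebra ℚ (H →L[ℂ] H) := .restrictScalars ℚ ℝ _
  have hunit : IsUnit M := by
    have : IsNoetherianRing (H →L[ℂ] H) := isNoetherian_of_tower ℂ inferInstance
    refine IsUnit.of_mul_eq_one_right (J * (star M * J)) ?_
    rw [mul_assoc, hM, hJJ]
  obtain ⟨c, hc, hseg⟩ := exists_rotation_isUnit_segment M hunit
  have hcc : starRingEnd ℂ c * c = 1 := by
    rw [← Complex.normSq_eq_conj_mul_self, Complex.normSq_eq_norm_sq, hc]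
    norm_num
  have hcM : star (c • M) * J * (c • M) = J := by
    rw [star_smul, smul_mul_assoc, smul_mul_assoc, mul_smul_comm, smul_smul, hM,
      ← starRingEnd_apply, hcc, one_smul]
  have hskew := star_segmentLog_mul hcM hseg
  set X := segmentLog (c • M)
  refine ⟨c, fun t => NormedSpace.exp (t • X), hc,
    NormedSpace.exp_continuous.comp (by fun_prop), ?_, ?_, fun s t => ?_,
    star_exp_smul_mul_exp_smul hskew⟩
  · simp
  · simpa using exp_segmentLog hseg
  · simp only [add_smul]
    exact NormedSpace.exp_add_of_commute (((Commute.refl X).smul_left s).smul_right t)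

end FiniteDimensionalOperators

section Hyperboloid

open scoped InnerProductSpace

variable {E : Type*} [NormedAddCommGroup E] [InnerProductSpace ℂ E]

/-- The indefinite form `‖z‖² - |w|²` on `E × ℂ`. -/
def lorentzForm (x : WithLp 2 (E × ℂ)) : ℝ := ‖x.fst‖ ^ 2 - ‖x.snd‖ ^ 2

/-- The reflection `(z, w) ↦ (z, -w)`, which represents `lorentzForm`. -/
def lorentzSign (E : Type*) [NormedAddCommGroup E] [InnerProductSpace ℂ E] :
    WithLp 2 (E × ℂ) →L[ℂ] WithLp 2 (E × ℂ) :=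
  ((WithLp.prodContinuousLinearEquiv 2 ℂ E ℂ).symm : E × ℂ →L[ℂ] WithLp 2 (E × ℂ)) ∘L
    ((WithLp.fstL 2 ℂ E ℂ).prod (-WithLp.sndL 2 ℂ E ℂ))

/-- The point of `E × ℂ` with homogeneous coordinates `(z, 1)`. -/
def homogenize (z : E) : WithLp 2 (E × ℂ) := WithLp.toLp 2 (z, 1)

/-- The linear fractional map of `E` induced by a linear map of `E × ℂ`. -/
def fracAct (M : WithLp 2 (E × ℂ) →L[ℂ] WithLp 2 (E × ℂ)) (z : E) : E :=
  (M (homogenize z)).snd⁻¹ • (M (homogenize z)).fst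

theorem inner_lorentzSign (x y : WithLp 2 (E × ℂ)) :
    ⟪lorentzSign E x, y⟫_ℂ = ⟪x.fst, y.fst⟫_ℂ - ⟪x.snd, y.snd⟫_ℂ := by
  simp [lorentzSign, WithLp.prod_inner_apply, WithLp.fstL, WithLp.sndL, sub_eq_add_neg]

theorem inner_lorentzSign_self (x : WithLp 2 (E × ℂ)) :
    ⟪lorentzSign E x, x⟫_ℂ = lorentzForm x := by
  rw [inner_lorentzSign, inner_self_eq_norm_sq_to_K, inner_self_eq_norm_sq_to_K, lorentzForm]
  push_cast
  rfl

theorem inner_lorentzSign_conj (x y : WithLp 2 (E × ℂ)) :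
    ⟪lorentzSign E x, y⟫_ℂ = starRingEnd ℂ ⟪lorentzSign E y, x⟫_ℂ := by
  rw [inner_lorentzSign, inner_lorentzSign, map_sub, inner_conj_symm, inner_conj_symm]

theorem lorentzSign_mul_self : lorentzSign E * lorentzSign E = 1 := by
  ext x
  simp [lorentzSign, WithLp.fstL, WithLp.sndL]
  rfl

theorem lorentzForm_map_iff [CompleteSpace E] (M : WithLp 2 (E × ℂ) →L[ℂ] WithLp 2 (E × ℂ)) :
    (∀ x, lorentzForm (M x) = lorentzForm x) ↔ star M * lorentzSign E * M = lorentzSign E := by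
  have hinner : ∀ x, ⟪(star M * lorentzSign E * M) x, x⟫_ℂ = lorentzForm (M x) := fun x => by
    rw [← inner_lorentzSign_self, ContinuousLinearMap.star_eq_adjoint]
    simp [ContinuousLinearMap.adjoint_inner_left]
  constructor
  · intro h
    rw [← sub_eq_zero]
    have := (inner_map_self_eq_zero
      ((star M * lorentzSign E * M - lorentzSign E : WithLp 2 (E × ℂ) →L[ℂ] WithLp 2 (E × ℂ)) :
        WithLp 2 (E × ℂ) →ₗ[ℂ] WithLp 2 (E × ℂ))).1 fun x => by
      rw [ContinuousLinearMap.coe_coe, _root_.sub_apply, inner_sub_left, hinner,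
        inner_lorentzSign_self, h, sub_self]
    exact ContinuousLinearMap.coe_injective this
  · intro h x
    have := hinner x
    rw [h, inner_lorentzSign_self] at this
    exact_mod_cast this.symm

theorem lorentzForm_homogenize_neg {E : Type*} [NormedAddCommGroup E] {z : E} (hz : z ∈ Metric.ball (0 : E) 1) :
    lorentzForm (homogenize z) < 0 := by
  rw [mem_ball_zero_iff] at hz
  simp only [lorentzForm, homogenize, WithLp.toLp_fst, WithLp.toLp_snd, norm_one]
  nlinarith [norm_nonneg z]

variable {M M' : WithLp 2 (E × ℂ) →L[ℂ] WithLp 2 (E × ℂ)} {z : E}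

theorem snd_map_homogenize_ne_zero (hM : ∀ x, lorentzForm (M x) = lorentzForm x)
    (hz : z ∈ Metric.ball (0 : E) 1) : (M (homogenize z)).snd ≠ 0 := by
  intro h
  have := lorentzForm_homogenize_neg hz
  rw [← hM, lorentzForm, h] at this
  simp at this
  nlinarith [sq_nonneg ‖(M (homogenize z)).fst‖]

theorem fracAct_mem_ball (hM : ∀ x, lorentzForm (M x) = lorentzForm x)
    (hz : z ∈ Metric.ball (0 : E) 1) : fracAct M z ∈ Metric.ball (0 : E) 1 := by
  have h0 := norm_pos_iff.2 (snd_map_homogenize_ne_zero hM hz)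
  have := lorentzForm_homogenize_neg hz
  rw [← hM, lorentzForm, sub_neg] at this
  rw [mem_ball_zero_iff, fracAct, norm_smul, norm_inv, inv_mul_lt_iff₀ h0, mul_one]
  exact lt_of_pow_lt_pow_left₀ 2 h0.le this

theorem map_homogenize (hM : ∀ x, lorentzForm (M x) = lorentzForm x)
    (hz : z ∈ Metric.ball (0 : E) 1) :
    M (homogenize z) = (M (homogenize z)).snd • homogenize (fracAct M z) := by
  have h0 := snd_map_homogenize_ne_zero hM hz
  apply WithLp.ofLp_injective
  ext1
  · simp only [homogenize, fracAct, WithLp.ofLp_smul, Prod.smul_fst, WithLp.ofLp_fst] at h0 ⊢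
    rw [smul_smul, mul_inv_cancel₀ h0, one_smul]
  · simp [homogenize]

theorem fracAct_eq_of_map_eq {c : ℂ} {w : E} (hc : c ≠ 0)
    (h : M (homogenize z) = c • homogenize w) : fracAct M z = w := by
  rw [fracAct, h]
  simp [homogenize, smul_smul, inv_mul_cancel₀ hc]

theorem fracAct_one (z : E) : fracAct 1 z = z :=
  fracAct_eq_of_map_eq one_ne_zero (by simp)

theorem fracAct_smul {c : ℂ} (hc : c ≠ 0) (hM : ∀ x, lorentzForm (M x) = lorentzForm x)
    (hz : z ∈ Metric.ball (0 : E) 1) : fracAct (c • M) z = fracAct M z :=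
  fracAct_eq_of_map_eq (mul_ne_zero hc (snd_map_homogenize_ne_zero hM hz)) (by
    rw [_root_.smul_apply, mul_smul, ← map_homogenize hM hz])

theorem fracAct_mul (hM : ∀ x, lorentzForm (M x) = lorentzForm x)
    (hM' : ∀ x, lorentzForm (M' x) = lorentzForm x) (hz : z ∈ Metric.ball (0 : E) 1) :
    fracAct (M * M') z = fracAct M (fracAct M' z) := by
  have hz' := fracAct_mem_ball hM' hz
  refine fracAct_eq_of_map_eq (mul_ne_zero (snd_map_homogenize_ne_zero hM' hz)
    (snd_map_homogenize_ne_zero hM hz')) ?_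
  rw [mul_apply_eq_comp, map_homogenize hM' hz, map_smul, map_homogenize hM hz',
    smul_smul]
  simp [homogenize]

theorem differentiable_homogenize : Differentiable ℂ (homogenize (E := E)) := by
  have : homogenize (E := E) = fun z => (WithLp.prodContinuousLinearEquiv 2 ℂ E ℂ).symm (z, 1) := by
    funext z; rfl
  rw [this]
  fun_prop

theorem differentiableOn_fracAct (hM : ∀ x, lorentzForm (M x) = lorentzForm x) :
    DifferentiableOn ℂ (fracAct M) (Metric.ball (0 : E) 1) := by
  intro z hz
  have hd := (M.differentiable.comp (differentiable_homogenize (E := E))).differentiableAt (x := z)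
  have hf := (WithLp.fstL 2 ℂ E ℂ).differentiable.differentiableAt.comp z hd
  have hs := (WithLp.sndL 2 ℂ E ℂ).differentiable.differentiableAt.comp z hd
  exact ((hs.inv (snd_map_homogenize_ne_zero hM hz)).smul hf).differentiableWithinAt

theorem continuousOn_fracAct_uncurry {T : ℝ → WithLp 2 (E × ℂ) →L[ℂ] WithLp 2 (E × ℂ)}
    (hT : Continuous T) (hM : ∀ t x, lorentzForm (T t x) = lorentzForm x) :
    ContinuousOn (fun p : ℝ × E => fracAct (T p.1) p.2) (univ ×ˢ Metric.ball (0 : E) 1) := by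
  have hd : Continuous fun p : ℝ × E => T p.1 (homogenize p.2) :=
    (hT.comp continuous_fst).clm_apply (differentiable_homogenize.continuous.comp continuous_snd)
  have hf := (WithLp.fstL 2 ℂ E ℂ).continuous.comp hd
  have hs := (WithLp.sndL 2 ℂ E ℂ).continuous.comp hd
  exact (hs.continuousOn.inv₀ fun p hp => snd_map_homogenize_ne_zero (hM p.1) hp.2).smul
    hf.continuousOn

end Hyperboloid

section Reflection

open scoped InnerProductSpace

variable {E : Type*} [NormedAddCommGroup E] [InnerProductSpace ℂ E]

/-- The reflection along `u` with respect to `lorentzForm`. -/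
def lorentzReflection (u : WithLp 2 (E × ℂ)) : WithLp 2 (E × ℂ) →L[ℂ] WithLp 2 (E × ℂ) :=
  1 - (2 / (lorentzForm u : ℂ)) • (innerSL ℂ (lorentzSign E u)).smulRight u

theorem lorentzReflection_apply (u x : WithLp 2 (E × ℂ)) :
    lorentzReflection u x = x - (2 / (lorentzForm u : ℂ) * ⟪lorentzSign E u, x⟫_ℂ) • u := by
  simp [lorentzReflection, smul_smul]

theorem lorentzReflection_mul_self {u : WithLp 2 (E × ℂ)} (hu : lorentzForm u ≠ 0) :
    lorentzReflection u * lorentzReflection u = 1 := by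
  have hu' : (lorentzForm u : ℂ) ≠ 0 := by exact_mod_cast hu
  ext1 x
  rw [mul_apply_eq_comp, lorentzReflection_apply, lorentzReflection_apply, inner_sub_right,
    inner_smul_right, inner_lorentzSign_self, one_apply_eq_self]
  have : 2 / (lorentzForm u : ℂ) * (⟪lorentzSign E u, x⟫_ℂ -
      2 / (lorentzForm u : ℂ) * ⟪lorentzSign E u, x⟫_ℂ * lorentzForm u) =
      -(2 / (lorentzForm u : ℂ) * ⟪lorentzSign E u, x⟫_ℂ) := by
    field_simp
    ring
  rw [this]
  module

theorem lorentzForm_lorentzReflection {u : WithLp 2 (E × ℂ)} (hu : lorentzForm u ≠ 0)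
    (x : WithLp 2 (E × ℂ)) : lorentzForm (lorentzReflection u x) = lorentzForm x := by
  have hu' : (lorentzForm u : ℂ) ≠ 0 := by exact_mod_cast hu
  rw [← Complex.ofReal_inj, ← inner_lorentzSign_self, ← inner_lorentzSign_self,
    lorentzReflection_apply, map_sub, map_smul, inner_sub_left, inner_sub_right, inner_sub_right,
    inner_smul_left, inner_smul_left, inner_smul_right, inner_smul_right, inner_lorentzSign_self u,
    inner_lorentzSign_conj x u]
  simp only [map_mul, map_div₀, Complex.conj_ofReal, map_ofNat]
  field_simp
  ring

theorem exists_involution_fracAct_zero_eq {b : E} (hb : b ∈ Metric.ball (0 : E) 1) :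
    ∃ R : WithLp 2 (E × ℂ) →L[ℂ] WithLp 2 (E × ℂ),
      (∀ x, lorentzForm (R x) = lorentzForm x) ∧ R * R = 1 ∧ fracAct R 0 = b := by
  rw [mem_ball_zero_iff] at hb
  set σ : ℝ := √(1 - ‖b‖ ^ 2) with hσ
  have hpos : 0 < 1 - ‖b‖ ^ 2 := by nlinarith [norm_nonneg b]
  have hσ0 : 0 < σ := Real.sqrt_pos.2 hpos
  have hσ2 : σ ^ 2 = 1 - ‖b‖ ^ 2 := Real.sq_sqrt hpos.le
  set u : WithLp 2 (E × ℂ) := WithLp.toLp 2 (b, 1 + (σ : ℂ)) with hu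
  have hform : lorentzForm u = -(2 * σ * (1 + σ)) := by
    have : ‖(1 : ℂ) + σ‖ = 1 + σ := by
      rw [← Complex.ofReal_one, ← Complex.ofReal_add, Complex.norm_real, Real.norm_of_nonneg]
      positivity
    simp only [lorentzForm, hu, WithLp.toLp_fst, WithLp.toLp_snd, this]
    linarith
  have hne : lorentzForm u ≠ 0 := by
    rw [hform]
    exact neg_ne_zero.2 (by positivity)
  refine ⟨lorentzReflection u, lorentzForm_lorentzReflection hne, lorentzReflection_mul_self hne, ?_⟩
  have hσc : (σ : ℂ) ≠ 0 := by exact_mod_cast hσ0.ne'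
  have hσ1 : (1 : ℂ) + σ ≠ 0 := by exact_mod_cast (by positivity : (1 : ℝ) + σ ≠ 0)
  refine fracAct_eq_of_map_eq (c := -(σ : ℂ)⁻¹) (neg_ne_zero.2 (inv_ne_zero hσc)) ?_
  have hcoef : 2 / (lorentzForm u : ℂ) * ⟪lorentzSign E u, homogenize 0⟫_ℂ = (σ : ℂ)⁻¹ := by
    rw [inner_lorentzSign, hform]
    simp [homogenize, hu]
    field_simp
    ring
  rw [lorentzReflection_apply, hcoef]
  apply WithLp.ofLp_injective
  ext1
  · simp [homogenize, hu]
  · simp [homogenize, hu]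
    field_simp
    ring

end Reflection

section Automorphisms

variable {E : Type*} [NormedAddCommGroup E] [InnerProductSpace ℂ E]

/-- A holomorphic self-map of the unit ball that preserves the norm is linear. -/
theorem eq_fderiv_apply_of_norm_map_eq {g : E → E}
    (hg : DifferentiableOn ℂ g (Metric.ball (0 : E) 1))
    (hnorm : ∀ z ∈ Metric.ball (0 : E) 1, ‖g z‖ = ‖z‖) {z : E}
    (hz : z ∈ Metric.ball (0 : E) 1) : g z = fderiv ℂ g 0 z := by
  have hg0 : g 0 = 0 := by simpa using hnorm 0 (by simp)
  rcases eq_or_ne z 0 with rfl | hz0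
  · simpa using hg0
  have hzpos : 0 < ‖z‖ := norm_pos_iff.2 hz0
  have hz1 : ‖z‖ < 1 := by simpa using hz
  set h : ℂ → E := fun c => g (c • z) with hh
  have hmaps : MapsTo (fun c : ℂ => c • z) (Metric.ball 0 ‖z‖⁻¹) (Metric.ball (0 : E) 1) := by
    intro c hc
    rw [mem_ball_zero_iff] at hc ⊢
    rw [norm_smul]
    calc ‖c‖ * ‖z‖ < ‖z‖⁻¹ * ‖z‖ := by gcongr
      _ = 1 := inv_mul_cancel₀ hzpos.ne'
  have hh0 : h 0 = 0 := by simp [hh, hg0]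
  have hdiff : DifferentiableOn ℂ h (Metric.ball 0 ‖z‖⁻¹) :=
    hg.comp (by fun_prop) hmaps
  have hhmaps : MapsTo h (Metric.ball 0 ‖z‖⁻¹) (Metric.closedBall (h 0) 1) := by
    intro c hc
    rw [hh0, mem_closedBall_zero_iff, hh]
    simp only
    rw [hnorm _ (hmaps hc)]
    exact (mem_ball_zero_iff.1 (hmaps hc)).le
  have hone : (1 : ℂ) ∈ Metric.ball (0 : ℂ) ‖z‖⁻¹ := by
    simpa using (one_lt_inv₀ hzpos).2 hz1
  have hslope : dslope h 0 1 = g z := by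
    rw [dslope_of_ne _ one_ne_zero, slope_def_module]
    simp [hh, hg0]
  have : StrictConvexSpace ℝ E :=
    @UniformConvexSpace.toStrictConvexSpace E _ NormedSpace.complexToReal
      (@InnerProductSpace.toUniformConvexSpace E _ InnerProductSpace.complexToReal)
  have haff := Complex.affine_of_mapsTo_ball_of_norm_dslope_eq_div hdiff hhmaps hone
    (by rw [hslope, hnorm z hz]; simp)
  rw [hh0, hslope] at haff
  have hderiv : HasDerivAt h (g z) 0 := by
    have : HasDerivAt (fun c : ℂ => (0 : E) + (c - 0) • g z) (g z) 0 := by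
      simpa using (hasDerivAt_id (0 : ℂ)).smul_const (g z)
    exact this.congr_of_eventuallyEq
      (haff.eventuallyEq_of_mem (Metric.ball_mem_nhds _ (inv_pos.2 hzpos)))
  have hg' : HasFDerivAt g (fderiv ℂ g 0) ((0 : ℂ) • z) := by
    rw [zero_smul]
    exact (hg.differentiableAt (Metric.ball_mem_nhds _ one_pos)).hasFDerivAt
  have hderiv' : HasDerivAt h (fderiv ℂ g 0 z) 0 := by
    simpa [Function.comp_def] using hg'.comp_hasDerivAt (0 : ℂ)
      ((hasDerivAt_id (0 : ℂ)).smul_const z)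
  exact hderiv.unique hderiv'

theorem norm_map_eq_of_automorphism {g g' : E → E}
    (hg : DifferentiableOn ℂ g (Metric.ball (0 : E) 1))
    (hgm : MapsTo g (Metric.ball (0 : E) 1) (Metric.ball (0 : E) 1))
    (hg' : DifferentiableOn ℂ g' (Metric.ball (0 : E) 1))
    (hgm' : MapsTo g' (Metric.ball (0 : E) 1) (Metric.ball (0 : E) 1))
    (hleft : ∀ z ∈ Metric.ball (0 : E) 1, g' (g z) = z) (hg0 : g 0 = 0)
    {z : E} (hz : z ∈ Metric.ball (0 : E) 1) : ‖g z‖ = ‖z‖ := by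
  have hg0' : g' 0 = 0 := by simpa [hg0] using hleft 0 (by simp)
  refine le_antisymm (Complex.norm_le_norm_of_mapsTo_ball hg
    (hgm.mono_right Metric.ball_subset_closedBall) hg0 (mem_ball_zero_iff.1 hz)) ?_
  have := Complex.norm_le_norm_of_mapsTo_ball hg'
    (hgm'.mono_right Metric.ball_subset_closedBall) hg0' (mem_ball_zero_iff.1 (hgm hz))
  rwa [hleft z hz] at this

/-- The block diagonal operator `(z, w) ↦ (A z, w)`. -/
def extendByOne (A : E →L[ℂ] E) : WithLp 2 (E × ℂ) →L[ℂ] WithLp 2 (E × ℂ) :=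
  ((WithLp.prodContinuousLinearEquiv 2 ℂ E ℂ).symm : E × ℂ →L[ℂ] WithLp 2 (E × ℂ)) ∘L
    ((A ∘L WithLp.fstL 2 ℂ E ℂ).prod (WithLp.sndL 2 ℂ E ℂ))

theorem extendByOne_apply (A : E →L[ℂ] E) (x : WithLp 2 (E × ℂ)) :
    extendByOne A x = WithLp.toLp 2 (A x.fst, x.snd) := rfl

theorem ContinuousLinearMap.norm_map_of_norm_map_ball {A : E →L[ℂ] E}
    (hA : ∀ z ∈ Metric.ball (0 : E) 1, ‖A z‖ = ‖z‖) (z : E) : ‖A z‖ = ‖z‖ := by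
  have hpos : 0 < ‖z‖ + 1 := by positivity
  have hmem : (((‖z‖ + 1 : ℝ) : ℂ)⁻¹ • z) ∈ Metric.ball (0 : E) 1 := by
    rw [mem_ball_zero_iff, norm_smul, norm_inv, Complex.norm_real, Real.norm_of_nonneg hpos.le,
      inv_mul_lt_iff₀ hpos]
    linarith
  have := hA _ hmem
  rw [map_smul, norm_smul, norm_smul] at this
  refine mul_left_cancel₀ (norm_ne_zero_iff.2 (inv_ne_zero ?_)) this
  exact_mod_cast hpos.ne'

/-- Every automorphism of the unit ball is a linear fractional map. -/
theorem exists_eq_fracAct [CompleteSpace E] {φ ψ : E → E}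
    (hφ : DifferentiableOn ℂ φ (Metric.ball (0 : E) 1))
    (hφm : MapsTo φ (Metric.ball (0 : E) 1) (Metric.ball (0 : E) 1))
    (hψ : DifferentiableOn ℂ ψ (Metric.ball (0 : E) 1))
    (hψm : MapsTo ψ (Metric.ball (0 : E) 1) (Metric.ball (0 : E) 1))
    (hleft : ∀ z ∈ Metric.ball (0 : E) 1, ψ (φ z) = z) :
    ∃ M : WithLp 2 (E × ℂ) →L[ℂ] WithLp 2 (E × ℂ),
      (∀ x, lorentzForm (M x) = lorentzForm x) ∧
      ∀ z ∈ Metric.ball (0 : E) 1, fracAct M z = φ z := by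
  have h0 : (0 : E) ∈ Metric.ball (0 : E) 1 := by simp
  obtain ⟨R, hR, hRR, hR0⟩ := exists_involution_fracAct_zero_eq (hφm h0)
  have hinv : ∀ z ∈ Metric.ball (0 : E) 1, fracAct R (fracAct R z) = z := fun z hz => by
    rw [← fracAct_mul hR hR hz, hRR, fracAct_one]
  have hRm : MapsTo (fracAct R) (Metric.ball (0 : E) 1) (Metric.ball (0 : E) 1) :=
    fun z hz => fracAct_mem_ball hR hz
  have hRd := differentiableOn_fracAct hR
  set g : E → E := fracAct R ∘ φ with hgdef
  have hg : DifferentiableOn ℂ g (Metric.ball (0 : E) 1) := hRd.comp hφ hφm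
  have hg0 : g 0 = 0 := by
    rw [hgdef, Function.comp_apply, ← hR0, hinv 0 h0]
  have hnorm : ∀ z ∈ Metric.ball (0 : E) 1, ‖g z‖ = ‖z‖ := fun z hz =>
    norm_map_eq_of_automorphism (g' := ψ ∘ fracAct R) hg (hRm.comp hφm) (hψ.comp hRd hRm)
      (hψm.comp hRm) (fun w hw => by
        simp only [hgdef, Function.comp_apply]
        rw [hinv _ (hφm hw), hleft w hw]) hg0 hz
  set A := fderiv ℂ g 0
  have hgA : ∀ z ∈ Metric.ball (0 : E) 1, g z = A z := fun z hz =>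
    eq_fderiv_apply_of_norm_map_eq hg hnorm hz
  have hA := A.norm_map_of_norm_map_ball fun z hz => by rw [← hgA z hz, hnorm z hz]
  have hAform : ∀ x, lorentzForm (extendByOne A x) = lorentzForm x := fun x => by
    simp [extendByOne_apply, lorentzForm, hA]
  refine ⟨R * extendByOne A, fun x => by rw [mul_apply_eq_comp, hR, hAform], fun z hz => ?_⟩
  have : fracAct (extendByOne A) z = g z :=
    fracAct_eq_of_map_eq one_ne_zero (by
      rw [hgA z hz, extendByOne_apply, one_smul]
      rfl)
  rw [fracAct_mul hR hAform hz, this, hgdef, Function.comp_apply, hinv _ (hφm hz)]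

end Automorphisms

section Semigroups

/-- Semigroups of holomorphic self-maps can be transported along linear equivalences. -/
theorem IsHolSemigroupOn.conj {E F : Type*} [NormedAddCommGroup E] [NormedSpace ℂ E]
    [NormedAddCommGroup F] [NormedSpace ℂ F] {U : Set E} {Φ : ℝ → E → E}
    (h : IsHolSemigroupOn U Φ) (e : F ≃L[ℂ] E) :
    IsHolSemigroupOn (e ⁻¹' U) fun t z => e.symm (Φ t (e z)) := by
  obtain ⟨hm, hd, h0, hadd, hlim⟩ := h
  refine ⟨fun t ht z hz => ?_, fun t ht => ?_, fun z hz => ?_, fun s hs t ht z hz => ?_,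
    fun K hK hKc => ?_⟩
  · simpa using hm t ht hz
  · exact e.symm.differentiable.comp_differentiableOn
      ((hd t ht).comp e.differentiable.differentiableOn (mapsTo_preimage e U))
  · simp only [h0 _ hz, e.symm_apply_apply]
  · simp only [hadd s hs t ht _ hz, e.apply_symm_apply]
  · have hunif := e.symm.toContinuousLinearMap.uniformContinuous.comp_tendstoUniformlyOn
      ((hlim (e '' K) (image_subset_iff.2 hK) (hKc.image e.continuous)).comp e)
    refine (hunif.mono (subset_preimage_image e K)).congr_right fun z _ => ?_
    simp

variable {E : Type*} [NormedAddCommGroup E] [InnerProductSpace ℂ E]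

theorem isHolSemigroupOn_fracAct {T : ℝ → WithLp 2 (E × ℂ) →L[ℂ] WithLp 2 (E × ℂ)}
    (hcont : Continuous T) (hT0 : T 0 = 1) (hTadd : ∀ s t, T (s + t) = T s * T t)
    (hT : ∀ t x, lorentzForm (T t x) = lorentzForm x) :
    IsHolSemigroupOn (Metric.ball (0 : E) 1) fun t => fracAct (T t) := by
  refine ⟨fun t _ z hz => fracAct_mem_ball (hT t) hz,
    fun t _ => differentiableOn_fracAct (hT t), fun z _ => ?_, fun s _ t _ z hz => ?_,
    fun K hK hKc => ?_⟩
  · simp only [hT0, fracAct_one]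
  · simp only [hTadd, fracAct_mul (hT s) (hT t) hz]
  · have : CompactSpace K := isCompact_iff_compactSpace.1 hKc
    have hunif := Continuous.tendstoUniformly (fun (t : ℝ) (z : K) => fracAct (T t) (z : E))
      ((continuousOn_fracAct_uncurry hcont hT).comp_continuous
        (f := fun p : ℝ × K => (p.1, (p.2 : E))) (by fun_prop)
        fun p => ⟨mem_univ _, hK p.2.2⟩) 0
    rw [tendstoUniformlyOn_iff_tendstoUniformly_comp_coe]
    simp only [hT0, fracAct_one] at hunif
    exact fun v hv => (hunif v hv).filter_mono nhdsWithin_le_nhds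

/-- Every automorphism of the unit ball of a finite-dimensional inner product space embeds into a
semigroup of holomorphic self-maps. -/
theorem exists_isHolSemigroupOn_ball [FiniteDimensional ℂ E] {φ ψ : E → E}
    (hφ : DifferentiableOn ℂ φ (Metric.ball (0 : E) 1))
    (hφm : MapsTo φ (Metric.ball (0 : E) 1) (Metric.ball (0 : E) 1))
    (hψ : DifferentiableOn ℂ ψ (Metric.ball (0 : E) 1))
    (hψm : MapsTo ψ (Metric.ball (0 : E) 1) (Metric.ball (0 : E) 1))
    (hleft : ∀ z ∈ Metric.ball (0 : E) 1, ψ (φ z) = z) :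
    ∃ Φ : ℝ → E → E, IsHolSemigroupOn (Metric.ball (0 : E) 1) Φ ∧
      ∀ z ∈ Metric.ball (0 : E) 1, Φ 1 z = φ z := by
  have : CompleteSpace E := FiniteDimensional.complete ℂ E
  have : FiniteDimensional ℂ (WithLp 2 (E × ℂ)) :=
    (WithLp.linearEquiv 2 ℂ (E × ℂ)).symm.finiteDimensional
  obtain ⟨M, hM, hMφ⟩ := exists_eq_fracAct hφ hφm hψ hψm hleft
  obtain ⟨c, T, hc, hcont, hT0, hT1, hTadd, hT⟩ :=
    exists_one_parameter_group lorentzSign_mul_self ((lorentzForm_map_iff M).1 hM)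
  have hc0 : c ≠ 0 := norm_ne_zero_iff.1 (by rw [hc]; exact one_ne_zero)
  refine ⟨_, isHolSemigroupOn_fracAct hcont hT0 hTadd fun t => (lorentzForm_map_iff _).2 (hT t),
    fun z hz => ?_⟩
  simp only [hT1]
  rw [fracAct_smul hc0 hM hz, hMφ z hz]

end Semigroups

/-- Every automorphism `φ` of `B_N` (a biholomorphic bijection of `B_N` onto
itself, with holomorphic inverse `ψ`) can be embedded into a semigroup of
holomorphic self-maps of `B_N`. -/
theorem stmt17 {N : ℕ} (φ ψ : (Fin N → ℂ) → (Fin N → ℂ))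
    (hφd : DifferentiableOn ℂ φ (Ball N)) (hφm : MapsTo φ (Ball N) (Ball N))
    (hψd : DifferentiableOn ℂ ψ (Ball N)) (hψm : MapsTo ψ (Ball N) (Ball N))
    (hleft : ∀ z ∈ Ball N, ψ (φ z) = z) (hright : ∀ z ∈ Ball N, φ (ψ z) = z) :
    ∃ φt : ℝ → (Fin N → ℂ) → (Fin N → ℂ),
      IsHolSemigroupOn (Ball N) φt ∧ ∀ z ∈ Ball N, φt 1 z = φ z := by
  set e : (Fin N → ℂ) ≃L[ℂ] EuclideanSpace ℂ (Fin N) :=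
    (EuclideanSpace.equiv (Fin N) ℂ).symm
  have hball : Ball N = e ⁻¹' Metric.ball 0 1 := by
    ext z
    rw [mem_preimage, mem_ball_zero_iff, ← sq_lt_one_iff₀ (norm_nonneg _),
      EuclideanSpace.norm_sq_eq]
    rfl
  have hsymm : MapsTo e.symm (Metric.ball 0 1) (Ball N) := fun z hz => by
    rw [hball, mem_preimage, e.apply_symm_apply]
    exact hz
  have hmaps : MapsTo e (Ball N) (Metric.ball 0 1) := hball.le
  obtain ⟨Φ, hΦ, hΦ1⟩ := exists_isHolSemigroupOn_ball
    (φ := fun z => e (φ (e.symm z))) (ψ := fun z => e (ψ (e.symm z)))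
    (e.differentiable.comp_differentiableOn
      (hφd.comp e.symm.differentiable.differentiableOn hsymm))
    (hmaps.comp (hφm.comp hsymm))
    (e.differentiable.comp_differentiableOn
      (hψd.comp e.symm.differentiable.differentiableOn hsymm))
    (hmaps.comp (hψm.comp hsymm))
    (fun z hz => by
      simp only [e.symm_apply_apply, hleft _ (hsymm hz), e.apply_symm_apply])
  refine ⟨fun t z => e.symm (Φ t (e z)), hball ▸ hΦ.conj e, fun z hz => ?_⟩
  simp only [hΦ1 _ (hmaps hz), e.symm_apply_apply]
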